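/- (Post-collisional velocity weight estimate.) Let α ≥ 1. There exists a constant C_α > 0 such that for all v, v_* ∈ ℝ³ with v ≠ v_* and all σ ∈ S² with (v − v_*)·σ ≥ 0, setting v' := (v + v_*)/2 + (|v − v_*|/2)σ and letting θ ∈ [0, π/2] be defined by cos θ = (v − v_*)·σ / |v − v_*|, one has ⟨v'⟩^α − ⟨v⟩^α ≤ C_α ( ⟨v⟩^{α−1} + ⟨v_*⟩^{α−1} ) |v − v_*| sin(θ/2), where ⟨v⟩ := (1 + |v|²)^{1/2}. -/

import Mathlib

noncomputable section

open MeasureTheory Real Filter Metric Set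
open scoped RealInnerProductSpace Topology

/-- ℝ³ as a Euclidean space. -/
abbrev E3 : Type := EuclideanSpace ℝ (Fin 3)

/-- The surface measure on the unit sphere S² ⊂ ℝ³. -/
def sphμ : Measure (sphere (0 : E3) 1) := (volume : Measure E3).toSphere

/-- The characteristic function (Fourier transform) of a Borel measure on ℝ³,
`ψ(ξ) = ∫ e^{-i v·ξ} dΨ(v)`. -/
def charFn (Ψ : Measure E3) (ξ : E3) : ℂ :=
  ∫ v, Complex.exp (-(Complex.I * (⟪v, ξ⟫ : ℂ))) ∂Ψ

/-- `ψ` is a characteristic function of some Borel probability measure on ℝ³. -/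
def IsCharFn (ψ : E3 → ℂ) : Prop :=
  ∃ Ψ : Measure E3, IsProbabilityMeasure Ψ ∧ ψ = charFn Ψ

/-- Finiteness of `‖φ - 1‖_α`, i.e. the quantitative part of membership in `𝒦^α`. -/
def KBdd (α : ℝ) (φ : E3 → ℂ) : Prop :=
  ∃ C : ℝ, ∀ ξ : E3, ξ ≠ 0 → ‖φ ξ - 1‖ ≤ C * ‖ξ‖ ^ α

/-- Membership in the space `𝒦^α`. -/
def memK (α : ℝ) (φ : E3 → ℂ) : Prop := IsCharFn φ ∧ KBdd α φ

/-- The distance `‖φ - φ'‖_α = sup_{ξ ≠ 0} |φ(ξ) - φ'(ξ)|/|ξ|^α` on `𝒦^α`. -/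
def Kdist (α : ℝ) (φ φ' : E3 → ℂ) : ℝ :=
  ⨆ ξ : {ξ : E3 // ξ ≠ 0}, ‖φ ξ.1 - φ' ξ.1‖ / ‖(ξ.1 : E3)‖ ^ α

/-- `ξ⁺ = ξ/2 + (|ξ|/2)σ`. -/
def xiPlus (ξ : E3) (σ : sphere (0 : E3) 1) : E3 := (1/2 : ℝ) • ξ + (‖ξ‖ / 2) • (σ : E3)

/-- `ξ⁻ = ξ/2 - (|ξ|/2)σ`. -/
def xiMinus (ξ : E3) (σ : sphere (0 : E3) 1) : E3 := (1/2 : ℝ) • ξ - (‖ξ‖ / 2) • (σ : E3)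

/-- The Bobylev collision integrand at time `t`, frequency `ξ`, direction `σ`. -/
def bobylevIntegrand (b : ℝ → ℝ) (ψ : ℝ → E3 → ℂ) (t : ℝ) (ξ : E3)
    (σ : sphere (0 : E3) 1) : ℂ :=
  (b (⟪ξ, (σ : E3)⟫ / ‖ξ‖) : ℂ) *
    (ψ t (xiPlus ξ σ) * ψ t (xiMinus ξ σ) - ψ t ξ)

/-- `ψ : [0,∞) × ℝ³ → ℂ` is a solution of the Fourier-transformed (Bobylev)
homogeneous Boltzmann Cauchy problem with collision kernel `b` and initial datum `ψ₀`. -/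
structure IsBobylevSolution (b : ℝ → ℝ) (ψ : ℝ → E3 → ℂ) (ψ₀ : E3 → ℂ) : Prop where
  cont : ContinuousOn (fun p : ℝ × E3 => ψ p.1 p.2) (Set.Ici 0 ×ˢ Set.univ)
  init : ψ 0 = ψ₀
  isCharFn : ∀ t ≥ 0, IsCharFn (ψ t)
  integrable : ∀ t ≥ 0, ∀ ξ : E3, Integrable (bobylevIntegrand b ψ t ξ) sphμ
  eq : ∀ t ≥ 0, ∀ ξ : E3, HasDerivWithinAt (fun τ => ψ τ ξ)
      (∫ σ, bobylevIntegrand b ψ t ξ σ ∂sphμ) (Set.Ici 0) t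

/-- Continuity of `t ↦ ψ(t,·)` from `[0,∞)` into the metric space `(𝒦^α, ‖·‖_α)`. -/
def KContinuous (α : ℝ) (ψ : ℝ → E3 → ℂ) : Prop :=
  ∀ t₀ ∈ Set.Ici (0:ℝ), Tendsto (fun t => Kdist α (ψ t) (ψ t₀)) (𝓝[Set.Ici (0:ℝ)] t₀) (𝓝 0)

/-- The angular singularity assumption `b(cos θ) θ^{2+2s} → K` as `θ → 0+`. -/
def KernelSingular (b : ℝ → ℝ) (s K : ℝ) : Prop :=
  Tendsto (fun θ : ℝ => b (Real.cos θ) * θ ^ (2 + 2*s)) (𝓝[>] 0) (𝓝 K)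

/- The post-collisional velocity `v'` satisfies `|v' - v| = |v - v_*| sin (θ/2)`, because the
vectors `v - v_*` and `|v - v_*| σ` span a chord of a sphere. The bracket `⟨·⟩` is nondecreasing
and `1`-Lipschitz in the norm, so `⟨v'⟩ ≤ ⟨v⟩ + |v - v_*| sin (θ/2)` and `⟨v'⟩ ≤ ⟨v⟩ + ⟨v_*⟩`.
The mean value theorem for `t ↦ t ^ α` on `[⟨v⟩, ⟨v'⟩]` turns the first bound into the estimate,
the second one controlling `t ^ (α - 1)` on that interval. -/

theorem rpow_le_two_rpow_mul_rpow_add_rpow {p y z t : ℝ} (hy : 0 < y) (hyt : y ≤ t)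
    (htyz : t ≤ y + z) : t ^ p ≤ 2 ^ max p 0 * (y ^ p + z ^ p) := by
  have hyp : 0 ≤ y ^ p := rpow_nonneg hy.le p
  have hz : 0 ≤ z := nonneg_of_le_add_right (hyt.trans htyz)
  have hzp : 0 ≤ z ^ p := rpow_nonneg hz p
  rcases le_total p 0 with hp | hp
  · rw [max_eq_right hp, rpow_zero, one_mul]
    exact (rpow_le_rpow_of_nonpos hy hyt hp).trans (le_add_of_nonneg_right hzp)
  · have hmax : max y z ^ p ≤ y ^ p + z ^ p := by
      rcases max_choice y z with h | h <;> rw [h] <;> linarith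
    calc t ^ p ≤ (2 * max y z) ^ p :=
          rpow_le_rpow (hy.le.trans hyt)
            (by linarith [le_max_left y z, le_max_right y z]) hp
      _ = 2 ^ max p 0 * max y z ^ p := by
          rw [mul_rpow zero_le_two (hz.trans (le_max_right y z)), max_eq_left hp]
      _ ≤ 2 ^ max p 0 * (y ^ p + z ^ p) := by gcongr

theorem rpow_sub_rpow_le_mul_sub {α x y z : ℝ} (hα : 0 ≤ α) (hy : 0 < y) (hyx : y ≤ x)
    (hxyz : x ≤ y + z) :
    x ^ α - y ^ α ≤ α * (2 ^ max (α - 1) 0 * (y ^ (α - 1) + z ^ (α - 1))) * (x - y) := by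
  have hdiff : DifferentiableOn ℝ (fun t : ℝ => t ^ α) (Icc y x) := fun t ht =>
    (differentiableAt_rpow_const_of_ne α (hy.trans_le ht.1).ne').differentiableWithinAt
  refine (convex_Icc y x).image_sub_le_mul_sub_of_deriv_le hdiff.continuousOn
    (hdiff.mono interior_subset) (fun t ht => ?_) y (left_mem_Icc.2 hyx) x (right_mem_Icc.2 hyx) hyx
  obtain ⟨hyt, htx⟩ := interior_subset ht
  rw [Real.deriv_rpow_const]
  gcongr
  exact rpow_le_two_rpow_mul_rpow_add_rpow hy hyt (htx.trans hxyz)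

theorem rpow_sub_rpow_le_of_le_add {α x y z d : ℝ} (hα : 0 ≤ α) (hx : 0 ≤ x) (hy : 0 < y)
    (hz : 0 ≤ z) (hd : 0 ≤ d) (hxyd : x ≤ y + d) (hxyz : x ≤ y + z) :
    x ^ α - y ^ α ≤ α * 2 ^ max (α - 1) 0 * (y ^ (α - 1) + z ^ (α - 1)) * d := by
  rw [mul_assoc α]
  rcases le_total y x with hyx | hxy
  · refine (rpow_sub_rpow_le_mul_sub hα hy hyx hxyz).trans ?_
    gcongr
    linarith
  · exact (sub_nonpos.2 (rpow_le_rpow hx hxy hα)).trans (by positivity)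

section JapaneseBracket

variable {E : Type*} [SeminormedAddCommGroup E]

/-- The Japanese bracket `⟨v⟩ = (1 + |v|²)^{1/2}`, the velocity weight of the estimate. -/
def japaneseBracket (v : E) : ℝ := √(1 + ‖v‖ ^ 2)

theorem japaneseBracket_pos (v : E) : 0 < japaneseBracket v := sqrt_pos.2 (by positivity)

theorem norm_le_japaneseBracket (v : E) : ‖v‖ ≤ japaneseBracket v :=
  le_sqrt_of_sq_le (le_add_of_nonneg_left zero_le_one)

theorem japaneseBracket_rpow (v : E) (r : ℝ) :
    japaneseBracket v ^ r = (1 + ‖v‖ ^ 2) ^ (r / 2) :=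
  (rpow_div_two_eq_sqrt r (by positivity)).symm

theorem japaneseBracket_le_add {u v : E} {d : ℝ} (hd : 0 ≤ d) (huv : ‖u‖ ≤ ‖v‖ + d) :
    japaneseBracket u ≤ japaneseBracket v + d := by
  refine sqrt_le_iff.2 ⟨add_nonneg (japaneseBracket_pos v).le hd, ?_⟩
  calc 1 + ‖u‖ ^ 2 ≤ 1 + (‖v‖ + d) ^ 2 := by gcongr
    _ = (1 + ‖v‖ ^ 2) + 2 * ‖v‖ * d + d ^ 2 := by ring
    _ ≤ japaneseBracket v ^ 2 + 2 * japaneseBracket v * d + d ^ 2 := by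
        gcongr
        · exact (sq_sqrt (by positivity)).ge
        · exact norm_le_japaneseBracket v
    _ = (japaneseBracket v + d) ^ 2 := by ring

end JapaneseBracket

section NormedSpace

variable {E : Type*} [SeminormedAddCommGroup E] [NormedSpace ℝ E]

/-- The post-collisional velocity `v' = (v + v_*)/2 + (|v - v_*|/2) σ` of a particle of velocity
`v` after an elastic collision with one of velocity `vs = v_*`. The direction `σ` is an arbitrary
vector; it is a unit vector in the collision rule. -/
def postCollisional (v vs σ : E) : E := (1/2 : ℝ) • (v + vs) + (‖v - vs‖ / 2) • σ

theorem norm_postCollisional_le (v vs : E) {σ : E} (hσ : ‖σ‖ ≤ 1) :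
    ‖postCollisional v vs σ‖ ≤ ‖v‖ + ‖vs‖ :=
  calc ‖postCollisional v vs σ‖ ≤ 1 / 2 * ‖v + vs‖ + ‖v - vs‖ / 2 * ‖σ‖ := by
        refine (norm_add_le _ _).trans_eq ?_
        rw [norm_smul_of_nonneg one_half_pos.le, norm_smul_of_nonneg (by positivity)]
    _ ≤ 1 / 2 * (‖v‖ + ‖vs‖) + (‖v‖ + ‖vs‖) / 2 * 1 := by
        gcongr
        · exact norm_add_le v vs
        · exact norm_sub_le v vs
    _ = ‖v‖ + ‖vs‖ := by ring

end NormedSpace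

section InnerProductSpace

open InnerProductGeometry

variable {E : Type*} [NormedAddCommGroup E] [InnerProductSpace ℝ E]

theorem sin_half_angle_nonneg (x y : E) : 0 ≤ sin (angle x y / 2) :=
  sin_nonneg_of_nonneg_of_le_pi (by linarith [angle_nonneg x y])
    (by linarith [angle_nonneg x y, angle_le_pi x y])

theorem norm_sub_eq_two_mul_norm_mul_sin_half_angle {x y : E} (hxy : ‖x‖ = ‖y‖) :
    ‖x - y‖ = 2 * ‖x‖ * sin (angle x y / 2) := by
  have hnonneg : 0 ≤ 2 * ‖x‖ * sin (angle x y / 2) :=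
    mul_nonneg (by positivity) (sin_half_angle_nonneg x y)
  rw [← sq_eq_sq₀ (norm_nonneg _) hnonneg, mul_pow, sin_sq_eq_half_sub,
    mul_div_cancel₀ (angle x y) two_ne_zero, sq ‖x - y‖,
    norm_sub_sq_eq_norm_sq_add_norm_sq_sub_two_mul_norm_mul_norm_mul_cos_angle, ← hxy]
  ring

theorem norm_postCollisional_sub_left (v vs : E) {σ : E} (hσ : ‖σ‖ = 1) :
    ‖postCollisional v vs σ - v‖ = ‖v - vs‖ * sin (angle (v - vs) σ / 2) := by
  obtain rfl | hne := eq_or_ne v vs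
  · simp [postCollisional, ← two_smul ℝ v, smul_smul]
  have hw : 0 < ‖v - vs‖ := norm_pos_iff.2 (sub_ne_zero.2 hne)
  have hnorm : ‖v - vs‖ = ‖‖v - vs‖ • σ‖ := by rw [norm_smul, norm_norm, hσ, mul_one]
  have hchord : v - postCollisional v vs σ = (1/2 : ℝ) • ((v - vs) - ‖v - vs‖ • σ) := by
    rw [postCollisional]; module
  rw [norm_sub_rev, hchord, norm_smul_of_nonneg one_half_pos.le,
    norm_sub_eq_two_mul_norm_mul_sin_half_angle hnorm, angle_smul_right_of_pos _ _ hw]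
  ring

theorem japaneseBracket_postCollisional_le_add_sin (v vs : E) {σ : E} (hσ : ‖σ‖ = 1) :
    japaneseBracket (postCollisional v vs σ) ≤
      japaneseBracket v + ‖v - vs‖ * sin (angle (v - vs) σ / 2) := by
  rw [← norm_postCollisional_sub_left v vs hσ]
  exact japaneseBracket_le_add (norm_nonneg _) (norm_le_norm_add_norm_sub' _ _)

theorem japaneseBracket_postCollisional_le_add (v vs : E) {σ : E} (hσ : ‖σ‖ ≤ 1) :
    japaneseBracket (postCollisional v vs σ) ≤ japaneseBracket v + japaneseBracket vs :=
  (japaneseBracket_le_add (norm_nonneg vs) (norm_postCollisional_le v vs hσ)).trans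
    (add_le_add_right (norm_le_japaneseBracket vs) _)

theorem post_collisional_weight_estimate_general {α : ℝ} (hα : 0 ≤ α) (v vs : E) {σ : E}
    (hσ : ‖σ‖ = 1) :
    japaneseBracket (postCollisional v vs σ) ^ α - japaneseBracket v ^ α ≤
      α * 2 ^ max (α - 1) 0 * (japaneseBracket v ^ (α - 1) + japaneseBracket vs ^ (α - 1)) *
        ‖v - vs‖ * sin (angle (v - vs) σ / 2) := by
  rw [mul_assoc _ ‖v - vs‖]
  exact rpow_sub_rpow_le_of_le_add hα (japaneseBracket_pos _).le (japaneseBracket_pos v)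
    (japaneseBracket_pos vs).le (mul_nonneg (norm_nonneg _) (sin_half_angle_nonneg _ _))
    (japaneseBracket_postCollisional_le_add_sin v vs hσ)
    (japaneseBracket_postCollisional_le_add v vs hσ.le)

end InnerProductSpace

/-- post-collisional velocity weight estimate. -/
theorem post_collisional_weight_estimate (α : ℝ) (hα : 1 ≤ α) :
    ∃ C > (0:ℝ), ∀ v vs : E3, v ≠ vs → ∀ σ : Metric.sphere (0:E3) 1,
      0 ≤ ⟪v - vs, (σ : E3)⟫ →
      (1 + ‖(1/2 : ℝ) • (v + vs) + (‖v - vs‖ / 2) • (σ : E3)‖ ^ 2) ^ (α/2)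
          - (1 + ‖v‖ ^ 2) ^ (α/2)
        ≤ C * ((1 + ‖v‖ ^ 2) ^ ((α-1)/2) + (1 + ‖vs‖ ^ 2) ^ ((α-1)/2)) * ‖v - vs‖
            * Real.sin (Real.arccos (⟪v - vs, (σ : E3)⟫ / ‖v - vs‖) / 2) :=
  ⟨α * 2 ^ max (α - 1) 0, by positivity, fun v vs _ σ _ => by
    simpa only [japaneseBracket_rpow, postCollisional, InnerProductGeometry.angle,
      norm_eq_of_mem_sphere, mul_one] using post_collisional_weight_estimate_general
        (zero_le_one.trans hα) v vs (norm_eq_of_mem_sphere σ)⟩
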